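/- Let m∈ℕ, m≥1. There exists a constant C>0 depending only on m such that for all f,g ∈ C₀^∞(ℝ³;ℝ³), ‖ ∇^m((f·∇)g) − (f·∇)(∇^m g) ‖_{L²(ℝ³)} ≤ C ( ‖∇f‖_{L^∞(ℝ³)} ‖∇^m g‖_{L²(ℝ³)} + ‖∇g‖_{L^∞(ℝ³)} ‖∇^m f‖_{L²(ℝ³)} ). -/

import Mathlib

open MeasureTheory Set ENNReal

noncomputable section

abbrev E3 : Type := EuclideanSpace ℝ (Fin 3)

/-- The convection term `(f·∇)g`, i.e. the derivative of `g` in direction `f(x)`. -/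
def conv (f g : E3 → E3) (x : E3) : E3 := fderiv ℝ g x (f x)

/-- The commutator `[∇^m, f·∇]g = ∇^m((f·∇)g) − (f·∇)(∇^m g)`. -/
def commGrad (m : ℕ) (f g : E3 → E3) (x : E3) :
    ContinuousMultilinearMap ℝ (fun _ : Fin m => E3) E3 :=
  iteratedFDeriv ℝ m (conv f g) x - fderiv ℝ (iteratedFDeriv ℝ m g) x (f x)

/-!
Freezing the coefficient of `f·∇` at `f x` gives a constant-coefficient operator, which commutes
with `∇^m`. By Leibniz, what remains of the commutator at `x` is a sum of products
`∇^{i+1}g · ∇^{m-i}f` with `i < m`, so that `f` and `g` are both differentiated.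

These products are estimated by interpolation. Writing `|∂v|^{p+2} = |∂v|^p ∂v · ∂v`, an integration
by parts and Hölder's inequality show that the norms `‖∇ʲu‖_{L^{2n/j}}`, `0 ≤ j ≤ n`, are
log-convex in `j` up to a constant. With `n = m - 1`, `u = ∇g` and `v = ∇f`, the products
`‖∇ⁱu‖_{L^{2n/i}} ‖∇^{n-i}v‖_{L^{2n/(n-i)}}` are then log-convex in `i` up to a constant as well,
hence bounded by their values at the endpoints `i = 0` and `i = n`, which are the two terms on the
right-hand side.
-/

open scoped NNReal

section IteratedDerivatives

-- Needed to find the norms on nested spaces of continuous linear and multilinear maps.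
set_option maxSynthPendingDepth 3

variable {E F : Type*} [NormedAddCommGroup E] [NormedSpace ℝ E] [NormedAddCommGroup F]
  [NormedSpace ℝ F]

theorem norm_fderiv_fderiv_iteratedFDeriv {k : ℕ} {u : E → F} {x : E} :
    ‖fderiv ℝ (fderiv ℝ (iteratedFDeriv ℝ k u)) x‖ = ‖iteratedFDeriv ℝ (k + 2) u x‖ := by
  rw [fderiv_iteratedFDeriv, LinearIsometryEquiv.comp_fderiv, ← norm_fderiv_iteratedFDeriv]
  exact LinearIsometry.norm_toContinuousLinearMap_comp (LinearIsometryEquiv.toLinearIsometry _)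

theorem fderiv_fderiv_apply_const {h : E → F} {x : E}
    (hh : DifferentiableAt ℝ (fderiv ℝ h) x) (v w : E) :
    fderiv ℝ (fun y => fderiv ℝ h y v) x w = fderiv ℝ (fderiv ℝ h) x w v := by
  simp [fderiv_clm_apply hh (differentiableAt_const v)]

theorem iteratedFDeriv_fderiv_apply_const {m : ℕ} {g : E → F} (hg : ContDiff ℝ (m + 1) g)
    (v x : E) :
    iteratedFDeriv ℝ m (fun y => fderiv ℝ g y v) x = fderiv ℝ (iteratedFDeriv ℝ m g) x v := by
  induction m generalizing x with
  | zero =>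
    ext w
    simp [iteratedFDeriv_zero_eq_comp, LinearIsometryEquiv.comp_fderiv]
  | succ m ih =>
    have hiter : ContDiff ℝ 2 (iteratedFDeriv ℝ m g) :=
      hg.iteratedFDeriv_right (by push_cast; rw [add_assoc, add_comm, one_add_one_eq_two])
    have hiter' : DifferentiableAt ℝ (fderiv ℝ (iteratedFDeriv ℝ m g)) x :=
      (hiter.fderiv_right (m := 1) le_rfl).differentiable one_ne_zero x
    have hsymm : IsSymmSndFDerivAt ℝ (iteratedFDeriv ℝ m g) x :=
      hiter.contDiffAt.isSymmSndFDerivAt (by simp)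
    ext w
    rw [iteratedFDeriv_succ_apply_left, funext (ih (hg.of_le (by simp))),
      fderiv_fderiv_apply_const hiter', hsymm.eq (w 0) v,
      iteratedFDeriv_succ_eq_comp_left, LinearIsometryEquiv.comp_fderiv]
    rfl

end IteratedDerivatives

section CommutatorExpansion

variable {E F : Type*} [NormedAddCommGroup E] [NormedSpace ℝ E] [NormedAddCommGroup F]
  [NormedSpace ℝ F]

/-- The commutator `[∇^m, f·∇]g = ∇^m((f·∇)g) − (f·∇)(∇^m g)` of functions between arbitrary normed
spaces; `commGrad` is the case of vector fields on `ℝ³`. -/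
def convectionCommutator (m : ℕ) (f : E → E) (g : E → F) (x : E) : E [×m]→L[ℝ] F :=
  iteratedFDeriv ℝ m (fun y => fderiv ℝ g y (f y)) x - fderiv ℝ (iteratedFDeriv ℝ m g) x (f x)

theorem convectionCommutator_eq_iteratedFDeriv {m : ℕ} {f : E → E} {g : E → F}
    (hf : ContDiff ℝ m f) (hg : ContDiff ℝ (m + 1) g) (x : E) :
    convectionCommutator m f g x =
      iteratedFDeriv ℝ m (fun y => fderiv ℝ g y (f y - f x)) x := by
  have hg' : ContDiff ℝ m (fderiv ℝ g) := hg.fderiv_right le_rfl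
  have hsplit : (fun y => fderiv ℝ g y (f y - f x)) =
      (fun y => fderiv ℝ g y (f y)) - fun y => fderiv ℝ g y (f x) := by
    ext y
    simp
  rw [hsplit, iteratedFDeriv_sub_apply (hg'.clm_apply hf).contDiffAt
    (hg'.clm_apply contDiff_const).contDiffAt, iteratedFDeriv_fderiv_apply_const hg,
    convectionCommutator]

theorem norm_convectionCommutator_le {m : ℕ} {f : E → E} {g : E → F} (hf : ContDiff ℝ m f)
    (hg : ContDiff ℝ (m + 1) g) (x : E) :
    ‖convectionCommutator m f g x‖ ≤ ∑ i ∈ Finset.range m, (m.choose i : ℝ) *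
      (‖iteratedFDeriv ℝ (i + 1) g x‖ * ‖iteratedFDeriv ℝ (m - i) f x‖) := by
  have hfx : ∀ k ≠ 0, ‖iteratedFDeriv ℝ k (fun y => f y - f x) x‖ = ‖iteratedFDeriv ℝ k f x‖ := by
    intro k hk
    obtain ⟨l, rfl⟩ := Nat.exists_eq_succ_of_ne_zero hk
    have hsub : fderiv ℝ (fun y => f y - f x) = fderiv ℝ f := funext fun y => fderiv_sub_const _
    rw [← norm_iteratedFDeriv_fderiv, ← norm_iteratedFDeriv_fderiv, hsub]
  rw [convectionCommutator_eq_iteratedFDeriv hf hg]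
  refine (norm_iteratedFDeriv_clm_apply (hg.fderiv_right le_rfl) (hf.sub contDiff_const) x
    le_rfl).trans_eq ?_
  rw [Finset.sum_range_succ, Nat.sub_self, norm_iteratedFDeriv_zero, sub_self, norm_zero, mul_zero,
    add_zero]
  refine Finset.sum_congr rfl fun i hi => ?_
  rw [hfx _ (Nat.sub_ne_zero_of_lt (Finset.mem_range.1 hi)), norm_iteratedFDeriv_fderiv, mul_assoc]

end CommutatorExpansion

section Coordinates

variable {E G : Type*} [NormedAddCommGroup E] [NormedSpace ℝ E] [FiniteDimensional ℝ E]
  [NormedAddCommGroup G] [NormedSpace ℝ G] [FiniteDimensional ℝ G]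

variable (E G) in
theorem exists_enorm_le_sum_enorm_clm_apply :
    ∃ (ι : Type) (_ : Fintype ι) (e : ι → E) (ℓ : ι → G →L[ℝ] ℝ),
      ∀ T : E →L[ℝ] G, ‖T‖ₑ ≤ ∑ i, ‖ℓ i (T (e i))‖ₑ := by
  let b := Module.finBasis ℝ E
  let c := Module.finBasis ℝ G
  obtain ⟨B, -, hB⟩ := b.exists_opNNNorm_le (F := G)
  obtain ⟨K, -, hK⟩ := c.equivFun.toLinearMap.exists_antilipschitzWith c.equivFun.ker
  have hcoord (y : G) : ‖y‖₊ ≤ K * ∑ j, ‖c.coord j y‖₊ := by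
    have hy : ‖y‖₊ ≤ K * ‖c.equivFun y‖₊ := hK.le_mul_nnnorm (map_zero _) y
    refine hy.trans ?_
    gcongr
    exact pi_nnnorm_le_iff.2 fun j =>
      Finset.single_le_sum (f := fun j => ‖c.coord j y‖₊) (fun _ _ => zero_le) (Finset.mem_univ j)
  refine ⟨_, inferInstance, fun ij : Fin _ × Fin _ => b ij.1,
    fun ij => (B * K) • (c.coord ij.2).toContinuousLinearMap, fun T => ?_⟩
  have hT : ‖T‖₊ ≤ B * (K * ∑ i, ∑ j, ‖c.coord j (T (b i))‖₊) := by
    refine hB _ fun i => (hcoord _).trans ?_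
    gcongr
    exact Finset.single_le_sum (f := fun i => ∑ j, ‖c.coord j (T (b i))‖₊)
      (fun _ _ => zero_le) (Finset.mem_univ i)
  calc ‖T‖ₑ ≤ (B * (K * ∑ i, ∑ j, ‖c.coord j (T (b i))‖₊) : ℝ≥0) := by exact_mod_cast hT
    _ = _ := by
      simp [Fintype.sum_prod_type, enorm_eq_nnnorm, NNReal.smul_def, ← Finset.mul_sum, ← mul_assoc]

end Coordinates

theorem hasDerivAt_abs_rpow_mul_self {p : ℝ} (hp : 0 < p) (t : ℝ) :
    HasDerivAt (fun t : ℝ => |t| ^ p * t) ((p + 1) * |t| ^ p) t := by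
  have hcont : Continuous fun t : ℝ => |t| ^ p :=
    continuous_abs.rpow_const fun _ => Or.inr hp.le
  refine hasDerivAt_of_hasDerivAt_of_ne' (x := 0) (fun t ht => ?_)
    (hcont.mul continuous_id).continuousAt (hcont.const_mul (p + 1)).continuousAt t
  refine (((hasDerivAt_abs ht).rpow_const (p := p) (Or.inl (abs_ne_zero.2 ht))).mul
    (hasDerivAt_id t)).congr_deriv ?_
  have hpow : |t| ^ p = |t| ^ (p - 1) * |t| := by
    rw [← Real.rpow_add_one (abs_ne_zero.2 ht), sub_add_cancel]
  have hsign : (SignType.sign t : ℝ) * t = |t| := sign_mul_self t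
  simp only [id, mul_one, hpow]
  linear_combination p * |t| ^ (p - 1) * hsign

theorem eLpNorm_norm_rpow_smul_le {α F G : Type*} [MeasurableSpace α] {μ : Measure α}
    [NormedAddCommGroup F] [NormedAddCommGroup G] [NormedSpace ℝ G] {w : α → F} {z : α → G}
    (hw : AEStronglyMeasurable w μ) (hz : AEStronglyMeasurable z μ) {p : ℝ≥0} (hp : 0 < p) :
    eLpNorm ((fun x => ‖w x‖ ^ (p : ℝ)) • z) 1 μ ≤
      eLpNorm w (p + 2) μ ^ (p : ℝ) * eLpNorm z ((p + 2) / 2) μ := by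
  have hp0 : (p : ℝ≥0∞) ≠ 0 := by exact_mod_cast hp.ne'
  have : HolderTriple (((p : ℝ≥0∞) + 2) / p) ((p + 2) / 2) 1 := ⟨by
    rw [ENNReal.inv_div (by simp) (by simp [hp0]), ENNReal.inv_div (by simp) (by simp),
      ENNReal.div_add_div_same, ENNReal.div_self (by simp) (by simp), inv_one]⟩
  have hpow :
      eLpNorm (fun x => ‖w x‖ ^ (p : ℝ)) ((p + 2) / p) μ = eLpNorm w (p + 2) μ ^ (p : ℝ) := by
    rw [eLpNorm_norm_rpow _ (NNReal.coe_pos.2 hp), ENNReal.ofReal_coe_nnreal,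
      ENNReal.div_mul_cancel hp0 ENNReal.coe_ne_top]
  rw [← hpow]
  exact eLpNorm_smul_le_mul_eLpNorm hz
     (hw.norm.aemeasurable.pow_const (p : ℝ)).aestronglyMeasurable

section Interpolation

variable {E F G : Type*} [NormedAddCommGroup E] [NormedSpace ℝ E] [FiniteDimensional ℝ E]
  [MeasurableSpace E] [BorelSpace E] {μ : Measure E} [μ.IsAddHaarMeasure]
  [NormedAddCommGroup F] [NormedSpace ℝ F] [NormedAddCommGroup G] [NormedSpace ℝ G]

/-- Integrate `∂ₑv` by parts against `|∂ₑv|ᵖ ∂ₑv`. -/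
theorem integral_abs_fderiv_apply_rpow_eq {v : E → ℝ} (hv : ContDiff ℝ 2 v)
    (hvc : HasCompactSupport v) (e : E) {p : ℝ} (hp : 0 < p) :
    ∫ x, |fderiv ℝ v x e| ^ (p + 2) ∂μ =
      -((p + 1) * ∫ x, |fderiv ℝ v x e| ^ p * (fderiv ℝ (fderiv ℝ v) x e e * v x) ∂μ) := by
  set w : E → ℝ := fun x => fderiv ℝ v x e
  set φ : E → ℝ := fun x => |w x| ^ p * w x
  have hv' : ContDiff ℝ 1 (fderiv ℝ v) := hv.fderiv_right le_rfl
  have hw : ContDiff ℝ 1 w := hv'.clm_apply contDiff_const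
  have hwc : HasCompactSupport w := hvc.fderiv_apply (𝕜 := ℝ) e
  have hpow : Continuous fun x => |w x| ^ p := hw.continuous.abs.rpow_const fun _ => Or.inr hp.le
  have hφ : Continuous φ := hpow.mul hw.continuous
  have hφ_deriv (x : E) : HasFDerivAt φ (((p + 1) * |w x| ^ p) • fderiv ℝ w x) x :=
    (hasDerivAt_abs_rpow_mul_self hp (w x)).comp_hasFDerivAt x
      (hw.differentiable one_ne_zero x).hasFDerivAt
  have hφ_apply (x : E) :
      fderiv ℝ φ x e * v x =
        (p + 1) * (|w x| ^ p * (fderiv ℝ (fderiv ℝ v) x e e * v x)) := by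
    rw [(hφ_deriv x).fderiv, smul_apply,
      fderiv_fderiv_apply_const (hv'.differentiable one_ne_zero x), smul_eq_mul]
    ring
  have hφw (x : E) : φ x * fderiv ℝ v x e = |w x| ^ (p + 2) := by
    rw [Real.rpow_add_of_nonneg (abs_nonneg _) hp.le zero_le_two, Real.rpow_two, sq_abs]
    ring
  have hv'' : Continuous fun x => fderiv ℝ (fderiv ℝ v) x e e :=
    ((hv'.continuous_fderiv one_ne_zero).clm_apply continuous_const).clm_apply continuous_const
  have hparts := integral_mul_fderiv_eq_neg_fderiv_mul_of_integrable (μ := μ) (f := φ) (g := v)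
    (v := e) ?_ ((hφ.mul hw.continuous).integrable_of_hasCompactSupport hwc.mul_left)
    ((hφ.mul hv.continuous).integrable_of_hasCompactSupport hvc.mul_left)
    (fun x _ => (hφ_deriv x).differentiableAt) (fun x _ => hv.differentiable two_ne_zero x)
  · simpa only [hφw, hφ_apply, integral_const_mul] using hparts
  · simp only [hφ_apply]
    exact (continuous_const.mul (hpow.mul (hv''.mul hv.continuous))).integrable_of_hasCompactSupport
      hvc.mul_left.mul_left.mul_left

theorem eLpNorm_fderiv_apply_rpow_le {v : E → ℝ} (hv : ContDiff ℝ 2 v)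
    (hvc : HasCompactSupport v) (e : E) {p : ℝ≥0} (hp : 0 < p) :
    eLpNorm (fun x => fderiv ℝ v x e) (p + 2) μ ^ (p + 2 : ℝ) ≤ (p + 1) *
      eLpNorm ((fun x => ‖fderiv ℝ v x e‖ ^ (p : ℝ)) •
        (fun x => fderiv ℝ (fderiv ℝ v) x e e) • v) 1 μ := by
  set w : E → ℝ := fun x => fderiv ℝ v x e
  have hpow : eLpNorm w (p + 2) μ ^ (p + 2 : ℝ) = ∫⁻ x, ‖w x‖ₑ ^ (p + 2 : ℝ) ∂μ := by
    have := eLpNorm_nnreal_pow_eq_lintegral (μ := μ) (f := w) (p := p + 2) (by positivity)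
    exact_mod_cast this
  have hparts := integral_abs_fderiv_apply_rpow_eq (μ := μ) hv hvc e (NNReal.coe_pos.2 hp)
  have hint : Integrable (fun x => |w x| ^ (p + 2 : ℝ)) μ := by
    have hw : Continuous w := (hv.continuous_fderiv two_ne_zero).clm_apply continuous_const
    refine (hw.abs.rpow_const fun _ => Or.inr (by positivity)).integrable_of_hasCompactSupport
      ((hvc.fderiv_apply (𝕜 := ℝ) e).comp_left (g := fun t => |t| ^ (p + 2 : ℝ)) ?_)
    rw [abs_zero, Real.zero_rpow (by positivity)]
  calc eLpNorm w (p + 2) μ ^ (p + 2 : ℝ)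
      = ‖∫ x, |w x| ^ (p + 2 : ℝ) ∂μ‖ₑ := by
        rw [hpow, Real.enorm_of_nonneg (by positivity), ofReal_integral_eq_lintegral_ofReal hint
          (.of_forall fun x => by positivity)]
        refine lintegral_congr fun x => ?_
        rw [← ENNReal.ofReal_rpow_of_nonneg (abs_nonneg _) (by positivity), ← Real.norm_eq_abs,
          ofReal_norm]
    _ = (p + 1) * ‖∫ x, |w x| ^ (p : ℝ) * (fderiv ℝ (fderiv ℝ v) x e e * v x) ∂μ‖ₑ := by
        rw [hparts, enorm_neg, enorm_mul, Real.enorm_of_nonneg (by positivity)]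
        congr 1
        exact_mod_cast ENNReal.ofReal_coe_nnreal (p := p + 1)
    _ ≤ _ := by
        rw [eLpNorm_one_eq_lintegral_enorm]
        gcongr
        exact enorm_integral_le_lintegral_enorm _

theorem eLpNorm_fderiv_apply_sq_le {v : E → ℝ} (hv : ContDiff ℝ 2 v)
    (hvc : HasCompactSupport v) (e : E) {p : ℝ≥0} (hp : 0 < p) {q r : ℝ≥0∞}
    (hqr : q⁻¹ + r⁻¹ = 2 / (p + 2)) :
    eLpNorm (fun x => fderiv ℝ v x e) (p + 2) μ ^ 2 ≤ (p + 1) *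
      (eLpNorm v q μ * eLpNorm (fun x => fderiv ℝ (fderiv ℝ v) x e e) r μ) := by
  set w : E → ℝ := fun x => fderiv ℝ v x e
  set z : E → ℝ := fun x => fderiv ℝ (fderiv ℝ v) x e e
  have hw : Continuous w := (hv.continuous_fderiv two_ne_zero).clm_apply continuous_const
  have hz : Continuous z :=
    (((hv.fderiv_right (m := 1) le_rfl).continuous_fderiv one_ne_zero).clm_apply
      continuous_const).clm_apply continuous_const
  have hzv : eLpNorm (z • v) ((p + 2) / 2) μ ≤ eLpNorm v q μ * eLpNorm z r μ := by
    have : HolderTriple r q ((p + 2) / 2) := ⟨by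
      rw [add_comm, hqr, ENNReal.inv_div (by simp) (by simp)]⟩
    rw [mul_comm]
    exact eLpNorm_smul_le_mul_eLpNorm hv.continuous.aestronglyMeasurable hz.aestronglyMeasurable
  obtain h0 | h0 := eq_or_ne (eLpNorm w (p + 2) μ) 0
  · simp [h0]
  have htop : eLpNorm w (p + 2) μ ≠ ∞ :=
    (hw.memLp_of_hasCompactSupport (hvc.fderiv_apply (𝕜 := ℝ) e)).eLpNorm_lt_top.ne
  refine (ENNReal.mul_le_mul_iff_right (a := eLpNorm w (p + 2) μ ^ (p : ℝ)) (by simp [h0, htop])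
    (ENNReal.rpow_ne_top_of_nonneg p.coe_nonneg htop)).1 ?_
  calc eLpNorm w (p + 2) μ ^ (p : ℝ) * eLpNorm w (p + 2) μ ^ 2
      = eLpNorm w (p + 2) μ ^ (p + 2 : ℝ) := by
        rw [ENNReal.rpow_add _ _ h0 htop, ENNReal.rpow_two]
    _ ≤ (p + 1) * eLpNorm ((fun x => ‖w x‖ ^ (p : ℝ)) • (z • v)) 1 μ :=
        eLpNorm_fderiv_apply_rpow_le hv hvc e hp
    _ ≤ (p + 1) * (eLpNorm w (p + 2) μ ^ (p : ℝ) * eLpNorm (z • v) ((p + 2) / 2) μ) := by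
        gcongr
        exact eLpNorm_norm_rpow_smul_le hw.aestronglyMeasurable
          (hz.smul hv.continuous).aestronglyMeasurable hp
    _ ≤ (p + 1) * (eLpNorm w (p + 2) μ ^ (p : ℝ) * (eLpNorm v q μ * eLpNorm z r μ)) := by gcongr
    _ = _ := mul_left_comm _ _ _

theorem eLpNorm_clm_fderiv_apply_sq_le {u : E → G} (hu : ContDiff ℝ 2 u)
    (huc : HasCompactSupport u) (ℓ : G →L[ℝ] ℝ) (e : E) {p : ℝ≥0} (hp : 0 < p) {q r : ℝ≥0∞}
    (hqr : q⁻¹ + r⁻¹ = 2 / (p + 2)) :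
    eLpNorm (fun x => ℓ (fderiv ℝ u x e)) (p + 2) μ ^ 2 ≤ ((p + 1) * (‖ℓ‖₊ * ‖e‖₊) ^ 2 : ℝ≥0) *
      (eLpNorm u q μ * eLpNorm (fderiv ℝ (fderiv ℝ u)) r μ) := by
  have hu' : Differentiable ℝ (fderiv ℝ u) :=
    (hu.fderiv_right (m := 1) le_rfl).differentiable one_ne_zero
  have hfderiv : fderiv ℝ (ℓ ∘ u) = fun x => ℓ.comp (fderiv ℝ u x) :=
    funext fun x => ((ℓ.hasFDerivAt).comp x (hu.differentiable two_ne_zero x).hasFDerivAt).fderiv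
  have hfderiv₂ (x : E) : fderiv ℝ (fderiv ℝ (ℓ ∘ u)) x e e = ℓ (fderiv ℝ (fderiv ℝ u) x e e) := by
    rw [hfderiv, fderiv_clm_comp (differentiableAt_const ℓ) (hu' x)]
    simp
  have hv : eLpNorm (ℓ ∘ u) q μ ≤ ‖ℓ‖₊ * eLpNorm u q μ :=
    eLpNorm_le_nnreal_smul_eLpNorm_of_ae_le_mul (.of_forall fun x => ℓ.le_opNNNorm (u x)) q
  have hz : eLpNorm (fun x => ℓ (fderiv ℝ (fderiv ℝ u) x e e)) r μ ≤
      (‖ℓ‖₊ * ‖e‖₊ ^ 2 : ℝ≥0) * eLpNorm (fderiv ℝ (fderiv ℝ u)) r μ := by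
    refine eLpNorm_le_nnreal_smul_eLpNorm_of_ae_le_mul' (.of_forall fun x => ?_) r
    set T := fderiv ℝ (fderiv ℝ u) x
    calc ‖ℓ (T e e)‖ₑ ≤ ‖ℓ‖ₑ * (‖T‖ₑ * ‖e‖ₑ * ‖e‖ₑ) := by
          grw [ℓ.le_opENorm, (T e).le_opENorm, T.le_opENorm]
      _ = _ := by
          simp only [enorm_eq_nnnorm]
          push_cast
          ring
  have hscalar := eLpNorm_fderiv_apply_sq_le (μ := μ) (ℓ.contDiff.comp hu)
    (huc.comp_left (map_zero ℓ)) e hp hqr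
  simp only [hfderiv₂] at hscalar
  simp only [hfderiv, ContinuousLinearMap.comp_apply] at hscalar
  refine hscalar.trans ?_
  calc (p + 1 : ℝ≥0∞) * (eLpNorm (ℓ ∘ u) q μ *
        eLpNorm (fun x => ℓ (fderiv ℝ (fderiv ℝ u) x e e)) r μ)
      ≤ (p + 1) * (‖ℓ‖₊ * eLpNorm u q μ *
        ((‖ℓ‖₊ * ‖e‖₊ ^ 2 : ℝ≥0) * eLpNorm (fderiv ℝ (fderiv ℝ u)) r μ)) := by gcongr
    _ = _ := by
        push_cast
        ring

theorem exists_eLpNorm_fderiv_sq_le [FiniteDimensional ℝ G] {p : ℝ≥0} (hp : 0 < p) {q r : ℝ≥0∞}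
    (hqr : q⁻¹ + r⁻¹ = 2 / (p + 2)) :
    ∃ C : ℝ≥0, ∀ u : E → G, ContDiff ℝ 2 u → HasCompactSupport u →
      eLpNorm (fderiv ℝ u) (p + 2) μ ^ 2 ≤
        C * (eLpNorm u q μ * eLpNorm (fderiv ℝ (fderiv ℝ u)) r μ) := by
  obtain ⟨ι, _, e, ℓ, hT⟩ := exists_enorm_le_sum_enorm_clm_apply E G
  refine ⟨Fintype.card ι * ∑ i, (p + 1) * (‖ℓ i‖₊ * ‖e i‖₊) ^ 2, fun u hu huc => ?_⟩
  set B := eLpNorm u q μ * eLpNorm (fderiv ℝ (fderiv ℝ u)) r μ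
  have hcoord : eLpNorm (fderiv ℝ u) (p + 2) μ ≤
      ∑ i, eLpNorm (fun x => ℓ i (fderiv ℝ u x (e i))) (p + 2) μ := by
    have hmeas (i) : AEStronglyMeasurable (fun x => ‖ℓ i (fderiv ℝ u x (e i))‖ₑ) μ :=
      ((ℓ i).continuous.comp ((hu.continuous_fderiv two_ne_zero).clm_apply
        continuous_const)).enorm.aestronglyMeasurable
    calc eLpNorm (fderiv ℝ u) (p + 2) μ
        ≤ eLpNorm (∑ i, fun x => ‖ℓ i (fderiv ℝ u x (e i))‖ₑ) (p + 2) μ :=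
          eLpNorm_mono_enorm fun x => by simpa using hT (fderiv ℝ u x)
      _ ≤ ∑ i, eLpNorm (fun x => ‖ℓ i (fderiv ℝ u x (e i))‖ₑ) (p + 2) μ :=
          eLpNorm_sum_le (fun i _ => hmeas i) (one_le_two.trans le_add_self)
      _ = _ := by simp only [eLpNorm_enorm]
  calc eLpNorm (fderiv ℝ u) (p + 2) μ ^ 2
      ≤ (∑ i, eLpNorm (fun x => ℓ i (fderiv ℝ u x (e i))) (p + 2) μ) ^ 2 := by gcongr
    _ ≤ Fintype.card ι * ∑ i, eLpNorm (fun x => ℓ i (fderiv ℝ u x (e i))) (p + 2) μ ^ 2 := by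
        simpa [show (2 - 1 : ℝ) = 1 by norm_num] using
          ENNReal.rpow_sum_le_const_mul_sum_rpow Finset.univ
            (fun i => eLpNorm (fun x => ℓ i (fderiv ℝ u x (e i))) (p + 2) μ) one_le_two
    _ ≤ Fintype.card ι * ∑ i, ((p + 1) * (‖ℓ i‖₊ * ‖e i‖₊) ^ 2 : ℝ≥0) * B := by
        gcongr with i
        exact eLpNorm_clm_fderiv_apply_sq_le hu huc (ℓ i) (e i) hp hqr
    _ = _ := by
        rw [← Finset.sum_mul]
        push_cast
        ring

open ContinuousMultilinearMap in
instance finiteDimensional_continuousMultilinearMap [FiniteDimensional ℝ F] (k : ℕ) :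
    FiniteDimensional ℝ (E [×k]→L[ℝ] F) :=
  FiniteDimensional.of_injective
    (toMultilinearMapLinear : (E [×k]→L[ℝ] F) →ₗ[ℝ] MultilinearMap ℝ (fun _ : Fin k => E) F)
    toMultilinearMap_injective

set_option maxSynthPendingDepth 3 in
theorem exists_eLpNorm_iteratedFDeriv_succ_sq_le [FiniteDimensional ℝ F] (k : ℕ) {p : ℝ≥0}
    (hp : 0 < p) {q r : ℝ≥0∞} (hqr : q⁻¹ + r⁻¹ = 2 / (p + 2)) :
    ∃ C : ℝ≥0, ∀ u : E → F, ContDiff ℝ (k + 2) u → HasCompactSupport u →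
      eLpNorm (iteratedFDeriv ℝ (k + 1) u) (p + 2) μ ^ 2 ≤
        C * (eLpNorm (iteratedFDeriv ℝ k u) q μ * eLpNorm (iteratedFDeriv ℝ (k + 2) u) r μ) := by
  obtain ⟨C, hC⟩ := exists_eLpNorm_fderiv_sq_le (G := E [×k]→L[ℝ] F) (μ := μ) hp hqr
  refine ⟨C, fun u hu huc => ?_⟩
  have hderiv : eLpNorm (iteratedFDeriv ℝ (k + 1) u) (p + 2) μ =
      eLpNorm (fderiv ℝ (iteratedFDeriv ℝ k u)) (p + 2) μ :=
    eLpNorm_congr_norm_ae (.of_forall fun x => norm_fderiv_iteratedFDeriv.symm)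
  have hderiv₂ : eLpNorm (iteratedFDeriv ℝ (k + 2) u) r μ =
      eLpNorm (fderiv ℝ (fderiv ℝ (iteratedFDeriv ℝ k u))) r μ :=
    eLpNorm_congr_norm_ae (.of_forall fun x => norm_fderiv_fderiv_iteratedFDeriv.symm)
  rw [hderiv, hderiv₂]
  exact hC _ (hu.iteratedFDeriv_right (by rw [add_comm])) (huc.iteratedFDeriv k)

theorem exists_eLpNorm_iteratedFDeriv_sq_le [FiniteDimensional ℝ F] {n j : ℕ} (hj : j + 2 ≤ n) :
    ∃ C : ℝ≥0, ∀ u : E → F, ContDiff ℝ (j + 2) u → HasCompactSupport u →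
      eLpNorm (iteratedFDeriv ℝ (j + 1) u) (2 * n / (j + 1)) μ ^ 2 ≤
        C * (eLpNorm (iteratedFDeriv ℝ j u) (2 * n / j) μ *
          eLpNorm (iteratedFDeriv ℝ (j + 2) u) (2 * n / (j + 2)) μ) := by
  have hj' : j + 1 < n := hj
  let p : ℝ≥0 := 2 * n / (j + 1) - 2
  have hp : 2 < (2 * n / (j + 1) : ℝ≥0) := by
    rw [lt_div_iff₀ (by positivity)]
    gcongr
    exact_mod_cast hj'
  have hp2 : (p : ℝ≥0∞) + 2 = 2 * n / (j + 1) := by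
    have h : p + 2 = 2 * n / (j + 1) := tsub_add_cancel_of_le hp.le
    have h' : ((p + 2 : ℝ≥0) : ℝ≥0∞) = (2 * n : ℝ≥0) / (j + 1 : ℝ≥0) := by
      rw [h, ENNReal.coe_div (by positivity)]
    simpa using h'
  rw [← hp2]
  refine exists_eLpNorm_iteratedFDeriv_succ_sq_le j (tsub_pos_of_lt hp) ?_
  have hn : (2 * n : ℝ≥0∞) ≠ 0 := by simpa using Nat.ne_zero_of_lt hj'
  have hn' : (2 * n : ℝ≥0∞) ≠ ∞ := by finiteness
  have hinv (i : ℝ≥0∞) : (2 * n / i)⁻¹ = i / (2 * n) := ENNReal.inv_div (.inr hn') (.inr hn)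
  rw [hp2, div_eq_mul_inv 2, hinv, hinv, hinv, ENNReal.div_add_div_same, ← mul_div_assoc]
  ring_nf

end Interpolation

section LogConvexity

theorem le_max_endpoints_of_sq_le_mul {n : ℕ} {d : ℕ → ℝ≥0∞} (hd : ∀ j ≤ n, d j ≠ ∞)
    (hconv : ∀ j, j + 2 ≤ n → d (j + 1) ^ 2 ≤ d j * d (j + 2)) {j : ℕ} (hj : j ≤ n) :
    d j ≤ max (d 0) (d n) := by
  induction n generalizing j with
  | zero => simp_all
  | succ n ih =>
    have ih' {i : ℕ} (hi : i ≤ n) : d i ≤ max (d 0) (d n) :=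
      ih (fun i hi => hd i (by omega)) (fun i hi => hconv i (by omega)) hi
    have hn : d n ≤ max (d 0) (d (n + 1)) := by
      by_contra! hlt
      obtain ⟨h0, hn1⟩ := max_lt_iff.1 hlt
      obtain _ | k := n
      · exact h0.false
      have hk : d k ≤ d (k + 1) := (ih' k.le_succ).trans (max_le h0.le le_rfl)
      refine (hconv k le_rfl).not_gt ?_
      calc d k * d (k + 2) ≤ d (k + 1) * d (k + 2) := by gcongr
        _ < d (k + 1) ^ 2 := by
          rw [sq]
          exact (ENNReal.mul_lt_mul_iff_right (bot_le.trans_lt h0).ne' (hd _ (by omega))).2 hn1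
    obtain rfl | hj := hj.eq_or_lt
    · exact le_max_right _ _
    · exact (ih' (Nat.lt_succ_iff.1 hj)).trans (max_le (le_max_left _ _) hn)

/-- The weights `K ^ j²` have second difference `2` in the exponent, so they absorb `K ^ 2`. -/
theorem le_pow_mul_max_endpoints_of_sq_le_mul {n : ℕ} {K : ℝ≥0} (hK : 1 ≤ K) {d : ℕ → ℝ≥0∞}
    (hd : ∀ j ≤ n, d j ≠ ∞)
    (hconv : ∀ j, j + 2 ≤ n → d (j + 1) ^ 2 ≤ K ^ 2 * (d j * d (j + 2))) {j : ℕ} (hj : j ≤ n) :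
    d j ≤ K ^ n ^ 2 * max (d 0) (d n) := by
  have hK' (i : ℕ) : (1 : ℝ≥0∞) ≤ K ^ i := one_le_pow₀ (by exact_mod_cast hK)
  have hmax := le_max_endpoints_of_sq_le_mul (d := fun j => K ^ j ^ 2 * d j) (n := n)
    (fun j hj => ENNReal.mul_ne_top (ENNReal.pow_ne_top ENNReal.coe_ne_top) (hd j hj))
    (fun j hj => ?_) hj
  · calc d j ≤ K ^ j ^ 2 * d j := le_mul_of_one_le_left' (hK' _)
      _ ≤ max (K ^ 0 ^ 2 * d 0) (K ^ n ^ 2 * d n) := hmax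
      _ ≤ max (K ^ n ^ 2 * d 0) (K ^ n ^ 2 * d n) := by
        gcongr
        · exact_mod_cast hK
        · exact Nat.zero_le n
      _ = _ := (mul_max_of_nonneg _ _ zero_le).symm
  · calc (K ^ (j + 1) ^ 2 * d (j + 1)) ^ 2 = K ^ (2 * (j + 1) ^ 2) * d (j + 1) ^ 2 := by ring
      _ ≤ K ^ (2 * (j + 1) ^ 2) * (K ^ 2 * (d j * d (j + 2))) := by
        gcongr
        exact hconv j hj
      _ = _ := by ring

end LogConvexity

section GagliardoNirenberg

variable {E F G : Type*} [NormedAddCommGroup E] [NormedSpace ℝ E] [MeasurableSpace E]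
  {μ : Measure E} [NormedAddCommGroup F] [NormedSpace ℝ F] [NormedAddCommGroup G] [NormedSpace ℝ G]

/-- The norms `‖∇ʲu‖_{L^{2n/j}}` of the Gagliardo–Nirenberg scale between `‖u‖_{L^∞}` (`j = 0`)
and `‖∇ⁿu‖_{L²}` (`j = n`). The division in `ℝ≥0∞` makes the exponent `∞` at `j = 0`, `n ≠ 0`. -/
def gagliardoNirenbergNorm (μ : Measure E) (n j : ℕ) (u : E → F) : ℝ≥0∞ :=
  eLpNorm (iteratedFDeriv ℝ j u) (2 * n / j) μ

theorem gagliardoNirenbergNorm_zero {n : ℕ} (hn : n ≠ 0) (u : E → F) :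
    gagliardoNirenbergNorm μ n 0 u = eLpNorm u ∞ μ := by
  rw [gagliardoNirenbergNorm, Nat.cast_zero, ENNReal.div_zero (by simpa using hn)]
  exact eLpNorm_congr_norm_ae (.of_forall fun x => norm_iteratedFDeriv_zero)

theorem gagliardoNirenbergNorm_self {n : ℕ} (hn : n ≠ 0) (u : E → F) :
    gagliardoNirenbergNorm μ n n u = eLpNorm (iteratedFDeriv ℝ n u) 2 μ := by
  rw [gagliardoNirenbergNorm, ENNReal.mul_div_cancel_right (by simpa using hn) (by simp)]

variable [BorelSpace E]

theorem gagliardoNirenbergNorm_ne_top [IsFiniteMeasureOnCompacts μ] {n j : ℕ} (hj : j ≤ n)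
    {u : E → F} (hu : ContDiff ℝ n u) (huc : HasCompactSupport u) :
    gagliardoNirenbergNorm μ n j u ≠ ∞ :=
  ((hu.continuous_iteratedFDeriv (by exact_mod_cast hj)).memLp_of_hasCompactSupport
    (huc.iteratedFDeriv j)).eLpNorm_lt_top.ne

theorem eLpNorm_norm_mul_norm_le_gagliardoNirenbergNorm [SecondCountableTopology E] {n i j : ℕ}
    (hn : n ≠ 0) (hij : i + j = n) {u : E → F} (hu : ContDiff ℝ n u) {v : E → G}
    (hv : ContDiff ℝ n v) :
    eLpNorm (fun x => ‖iteratedFDeriv ℝ i u x‖ * ‖iteratedFDeriv ℝ j v x‖) 2 μ ≤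
      gagliardoNirenbergNorm μ n i u * gagliardoNirenbergNorm μ n j v := by
  have hn0 : (2 * n : ℝ≥0∞) ≠ 0 := by simpa using hn
  have hntop : (2 * n : ℝ≥0∞) ≠ ∞ := by finiteness
  have : HolderTriple (2 * n / i) (2 * n / j) 2 := ⟨by
    rw [ENNReal.inv_div (.inr hntop) (.inr hn0), ENNReal.inv_div (.inr hntop) (.inr hn0),
      ENNReal.div_add_div_same, ← Nat.cast_add, hij, ← one_div]
    simpa using ENNReal.mul_div_mul_right 1 2 (c := n) (by simpa using hn) (by simp)⟩
  have hholder := eLpNorm_smul_le_mul_eLpNorm (μ := μ) (p := 2 * n / i) (q := 2 * n / j) (r := 2)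
    (hv.continuous_iteratedFDeriv (m := j) (by exact_mod_cast (by omega))).norm.aestronglyMeasurable
    (hu.continuous_iteratedFDeriv (m := i) (by exact_mod_cast (by omega))).norm.aestronglyMeasurable
  rwa [eLpNorm_norm, eLpNorm_norm] at hholder

variable [FiniteDimensional ℝ E] [μ.IsAddHaarMeasure] [FiniteDimensional ℝ F]
  [FiniteDimensional ℝ G]

variable (E F μ) in
theorem exists_gagliardoNirenbergNorm_sq_le (n : ℕ) :
    ∃ K : ℝ≥0, 1 ≤ K ∧ ∀ u : E → F, ContDiff ℝ n u → HasCompactSupport u → ∀ j, j + 2 ≤ n →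
      gagliardoNirenbergNorm μ n (j + 1) u ^ 2 ≤
        K ^ 2 * (gagliardoNirenbergNorm μ n j u * gagliardoNirenbergNorm μ n (j + 2) u) := by
  have hstep (j : ℕ) : ∃ C : ℝ≥0, j + 2 ≤ n → ∀ u : E → F, ContDiff ℝ n u →
      HasCompactSupport u → gagliardoNirenbergNorm μ n (j + 1) u ^ 2 ≤
        C * (gagliardoNirenbergNorm μ n j u * gagliardoNirenbergNorm μ n (j + 2) u) := by
    by_cases hj : j + 2 ≤ n
    · obtain ⟨C, hC⟩ := exists_eLpNorm_iteratedFDeriv_sq_le (E := E) (F := F) (μ := μ) hj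
      refine ⟨C, fun _ u hu huc => ?_⟩
      simpa [gagliardoNirenbergNorm] using hC u (hu.of_le (by exact_mod_cast hj)) huc
    · exact ⟨0, fun h => absurd h hj⟩
  choose C hC using hstep
  let K : ℝ≥0 := max 1 ((Finset.range n).sup C)
  have hK : 1 ≤ K := le_max_left _ _
  refine ⟨K, hK, fun u hu huc j hj => (hC j hj u hu huc).trans ?_⟩
  gcongr
  have hCK : C j ≤ K := (Finset.le_sup (Finset.mem_range.2 (by omega))).trans (le_max_right _ _)
  exact_mod_cast hCK.trans (le_self_pow₀ hK two_ne_zero)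

variable (E F G μ) in
theorem exists_gagliardoNirenbergNorm_mul_sq_le (n : ℕ) :
    ∃ K : ℝ≥0, 1 ≤ K ∧ ∀ (u : E → F) (v : E → G), ContDiff ℝ n u → HasCompactSupport u →
      ContDiff ℝ n v → HasCompactSupport v → ∀ i, i + 2 ≤ n →
      (gagliardoNirenbergNorm μ n (i + 1) u * gagliardoNirenbergNorm μ n (n - (i + 1)) v) ^ 2 ≤
        K ^ 2 * ((gagliardoNirenbergNorm μ n i u * gagliardoNirenbergNorm μ n (n - i) v) *
          (gagliardoNirenbergNorm μ n (i + 2) u *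
            gagliardoNirenbergNorm μ n (n - (i + 2)) v)) := by
  obtain ⟨K, hK, hu_conv⟩ := exists_gagliardoNirenbergNorm_sq_le E F μ n
  obtain ⟨L, hL, hv_conv⟩ := exists_gagliardoNirenbergNorm_sq_le E G μ n
  refine ⟨K * L, one_le_mul hK hL, fun u v hu huc hv hvc i hi => ?_⟩
  obtain ⟨l, rfl⟩ := Nat.exists_eq_add_of_le hi
  rw [show i + 2 + l - (i + 1) = l + 1 by omega, show i + 2 + l - i = l + 2 by omega,
    Nat.add_sub_cancel_left, mul_pow]
  refine (mul_le_mul' (hu_conv u hu huc i hi) (hv_conv v hv hvc l (by omega))).trans_eq ?_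
  push_cast
  ring

variable (E F G μ) in
theorem exists_eLpNorm_norm_mul_norm_le (n : ℕ) :
    ∃ C : ℝ≥0, ∀ (u : E → F) (v : E → G), ContDiff ℝ n u → HasCompactSupport u →
      ContDiff ℝ n v → HasCompactSupport v → ∀ i j, i + j = n →
      eLpNorm (fun x => ‖iteratedFDeriv ℝ i u x‖ * ‖iteratedFDeriv ℝ j v x‖) 2 μ ≤
        C * (eLpNorm u ∞ μ * eLpNorm (iteratedFDeriv ℝ n v) 2 μ +
          eLpNorm v ∞ μ * eLpNorm (iteratedFDeriv ℝ n u) 2 μ) := by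
  obtain rfl | hn := eq_or_ne n 0
  · refine ⟨1, fun u v hu _ hv _ i j hij => ?_⟩
    obtain ⟨rfl, rfl⟩ := Nat.add_eq_zero_iff.1 hij
    have hholder := eLpNorm_smul_le_mul_eLpNorm (μ := μ) (p := ∞) (q := 2) (r := 2)
      hv.continuous.norm.aestronglyMeasurable hu.continuous.norm.aestronglyMeasurable
    rw [eLpNorm_norm, eLpNorm_norm] at hholder
    have hv0 : eLpNorm (iteratedFDeriv ℝ 0 v) 2 μ = eLpNorm v 2 μ :=
      eLpNorm_congr_norm_ae (.of_forall fun x => norm_iteratedFDeriv_zero)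
    simp only [norm_iteratedFDeriv_zero, hv0, ENNReal.coe_one, one_mul]
    exact hholder.trans le_self_add
  obtain ⟨K, hK, hconv⟩ := exists_gagliardoNirenbergNorm_mul_sq_le E F G μ n
  refine ⟨K ^ n ^ 2, fun u v hu huc hv hvc i j hij => ?_⟩
  let c (i : ℕ) := gagliardoNirenbergNorm μ n i u * gagliardoNirenbergNorm μ n (n - i) v
  have hc_top (i) (hi : i ≤ n) : c i ≠ ∞ := ENNReal.mul_ne_top
    (gagliardoNirenbergNorm_ne_top hi hu huc) (gagliardoNirenbergNorm_ne_top (n.sub_le i) hv hvc)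
  have hc0 : c 0 = eLpNorm u ∞ μ * eLpNorm (iteratedFDeriv ℝ n v) 2 μ := by
    simp [c, gagliardoNirenbergNorm_zero hn, gagliardoNirenbergNorm_self hn]
  have hcn : c n = eLpNorm v ∞ μ * eLpNorm (iteratedFDeriv ℝ n u) 2 μ := by
    simp [c, gagliardoNirenbergNorm_zero hn, gagliardoNirenbergNorm_self hn, mul_comm]
  calc eLpNorm (fun x => ‖iteratedFDeriv ℝ i u x‖ * ‖iteratedFDeriv ℝ j v x‖) 2 μ
      ≤ c i := by
        obtain rfl : j = n - i := by omega
        exact eLpNorm_norm_mul_norm_le_gagliardoNirenbergNorm hn hij hu hv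
    _ ≤ K ^ n ^ 2 * max (c 0) (c n) :=
        le_pow_mul_max_endpoints_of_sq_le_mul hK hc_top (hconv u v hu huc hv hvc) (by omega)
    _ ≤ _ := by
        rw [hc0, hcn, ENNReal.coe_pow]
        gcongr
        exact max_le le_self_add le_add_self

end GagliardoNirenberg

section KatoPonce

variable {E F G : Type*} [NormedAddCommGroup E] [NormedSpace ℝ E] [FiniteDimensional ℝ E]
  [MeasurableSpace E] [BorelSpace E] {μ : Measure E} [μ.IsAddHaarMeasure]
  [NormedAddCommGroup F] [NormedSpace ℝ F] [FiniteDimensional ℝ F]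
  [NormedAddCommGroup G] [NormedSpace ℝ G] [FiniteDimensional ℝ G]

variable (E F G μ) in
theorem exists_eLpNorm_norm_fderiv_mul_norm_fderiv_le (m : ℕ) :
    ∃ C : ℝ≥0, ∀ (f : E → F) (g : E → G), ContDiff ℝ m f → HasCompactSupport f →
      ContDiff ℝ m g → HasCompactSupport g → ∀ i < m,
      eLpNorm (fun x => ‖iteratedFDeriv ℝ (i + 1) g x‖ * ‖iteratedFDeriv ℝ (m - i) f x‖) 2 μ ≤
        C * (eLpNorm (fderiv ℝ f) ∞ μ * eLpNorm (iteratedFDeriv ℝ m g) 2 μ +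
          eLpNorm (fderiv ℝ g) ∞ μ * eLpNorm (iteratedFDeriv ℝ m f) 2 μ) := by
  obtain _ | n := m
  · exact ⟨0, fun _ _ _ _ _ _ i hi => absurd hi i.not_lt_zero⟩
  obtain ⟨C, hC⟩ := exists_eLpNorm_norm_mul_norm_le E (E →L[ℝ] G) (E →L[ℝ] F) μ n
  refine ⟨C, fun f g hf hfc hg hgc i hi => ?_⟩
  have hproduct := hC (fderiv ℝ g) (fderiv ℝ f) (hg.fderiv_right le_rfl) (hgc.fderiv (𝕜 := ℝ))
    (hf.fderiv_right le_rfl) (hfc.fderiv (𝕜 := ℝ)) i (n - i) (by omega)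
  have hf_top : eLpNorm (iteratedFDeriv ℝ n (fderiv ℝ f)) 2 μ =
      eLpNorm (iteratedFDeriv ℝ (n + 1) f) 2 μ :=
    eLpNorm_congr_norm_ae (.of_forall fun x => norm_iteratedFDeriv_fderiv)
  have hg_top : eLpNorm (iteratedFDeriv ℝ n (fderiv ℝ g)) 2 μ =
      eLpNorm (iteratedFDeriv ℝ (n + 1) g) 2 μ :=
    eLpNorm_congr_norm_ae (.of_forall fun x => norm_iteratedFDeriv_fderiv)
  simp only [norm_iteratedFDeriv_fderiv, hf_top, hg_top] at hproduct
  rwa [Nat.succ_sub (Nat.le_of_lt_succ hi), add_comm (_ * _)]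

variable (E F μ) in
theorem kato_ponce_commutator_general (m : ℕ) :
    ∃ C : ℝ≥0, 0 < C ∧ ∀ (f : E → E) (g : E → F), ContDiff ℝ m f → HasCompactSupport f →
      ContDiff ℝ (m + 1) g → HasCompactSupport g →
      eLpNorm (convectionCommutator m f g) 2 μ ≤
        C * (eLpNorm (fderiv ℝ f) ∞ μ * eLpNorm (iteratedFDeriv ℝ m g) 2 μ +
          eLpNorm (fderiv ℝ g) ∞ μ * eLpNorm (iteratedFDeriv ℝ m f) 2 μ) := by
  obtain ⟨C, hC⟩ := exists_eLpNorm_norm_fderiv_mul_norm_fderiv_le E E F μ m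
  refine ⟨∑ i ∈ Finset.range m, m.choose i * C + 1, by positivity, fun f g hf hfc hg hgc => ?_⟩
  have hg' : ContDiff ℝ m g := hg.of_le le_self_add
  set B := eLpNorm (fderiv ℝ f) ∞ μ * eLpNorm (iteratedFDeriv ℝ m g) 2 μ +
    eLpNorm (fderiv ℝ g) ∞ μ * eLpNorm (iteratedFDeriv ℝ m f) 2 μ
  let P (i : ℕ) (x : E) : ℝ := ‖iteratedFDeriv ℝ (i + 1) g x‖ * ‖iteratedFDeriv ℝ (m - i) f x‖
  have hP (i) (hi : i ∈ Finset.range m) : Continuous (P i) := by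
    have hi' : i + 1 ≤ m := Finset.mem_range.1 hi
    exact (hg'.continuous_iteratedFDeriv (by exact_mod_cast hi')).norm.mul
      (hf.continuous_iteratedFDeriv (by exact_mod_cast m.sub_le i)).norm
  calc eLpNorm (convectionCommutator m f g) 2 μ
      ≤ eLpNorm (∑ i ∈ Finset.range m, (m.choose i : ℝ) • P i) 2 μ :=
        eLpNorm_mono_real fun x => by
          simpa [P] using norm_convectionCommutator_le hf hg x
    _ ≤ ∑ i ∈ Finset.range m, eLpNorm ((m.choose i : ℝ) • P i) 2 μ :=
        eLpNorm_sum_le (fun i hi => ((hP i hi).const_smul _).aestronglyMeasurable) one_le_two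
    _ ≤ ∑ i ∈ Finset.range m, m.choose i * (C * B) := by
        gcongr with i hi
        rw [eLpNorm_const_smul, Real.enorm_natCast]
        gcongr
        exact hC f g hf hfc hg' hgc i (Finset.mem_range.1 hi)
    _ ≤ (∑ i ∈ Finset.range m, m.choose i * C + 1 : ℝ≥0) * B := by
        push_cast
        rw [add_mul, Finset.sum_mul]
        simp only [mul_assoc]
        exact le_self_add

end KatoPonce

/-- Kato–Ponce commutator estimate in `L²`: for `m ≥ 1` there is
`C = C(m)` such that for all `f, g ∈ C₀^∞(ℝ³; ℝ³)`,
`‖[∇^m, f·∇]g‖_{L²} ≤ C (‖∇f‖_{L^∞} ‖∇^m g‖_{L²} + ‖∇g‖_{L^∞} ‖∇^m f‖_{L²})`. -/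
theorem kato_ponce_commutator (m : ℕ) (hm : 1 ≤ m) :
    ∃ C : ℝ, 0 < C ∧
      ∀ f g : E3 → E3,
        ContDiff ℝ (⊤ : ℕ∞) f → HasCompactSupport f →
        ContDiff ℝ (⊤ : ℕ∞) g → HasCompactSupport g →
        eLpNorm (commGrad m f g) 2 volume
          ≤ ENNReal.ofReal C *
            (eLpNorm (fun x => fderiv ℝ f x) ∞ volume
               * eLpNorm (iteratedFDeriv ℝ m g) 2 volume
             + eLpNorm (fun x => fderiv ℝ g x) ∞ volume
               * eLpNorm (iteratedFDeriv ℝ m f) 2 volume) := by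
  obtain ⟨C, hC, hbound⟩ := kato_ponce_commutator_general E3 E3 volume m
  refine ⟨C, hC, fun f g hf hfc hg hgc => ?_⟩
  rw [ENNReal.ofReal_coe_nnreal]
  exact hbound f g (hf.of_le (by exact_mod_cast le_top)) hfc
    (hg.of_le (by exact_mod_cast le_top)) hgc
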